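/- arXiv:2207.07053 — 3 statements merged into one kernel-verified Lean document; each statement's English description precedes it below -/
import Mathlib

section
/- Let X be a complete ordered family of equivalences (COFE), let f : X → X be contractive, and let x₀ : X. Then the sequence u n := f^[n] x₀ (the n-th iterate of f applied to x₀) is Cauchy, every limit l of u satisfies f l = l, and f has exactly one fixed point. -/
/-!
Since `≈[0]` is total, `n` applications of a contractive map make any two points `≈[n]`-equivalent.
All iterates from the `n`-th on are values of `f^[n]`, so they are `≈[n]`-equivalent to each other
and the sequence is Cauchy. The same estimate identifies two fixed points, as each is its own
`n`-th iterate. Finally, `f` preserves limits because it is non-expansive, so a limit `l` of the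
iterates and `f l` are limits of the same shifted sequence.
-/

/-- An ordered family of equivalences (OFE) on a type `X`. -/
structure OFE (X : Type*) where
  rel : ℕ → X → X → Prop
  equiv : ∀ n, Equivalence (rel n)
  total_zero : ∀ x y, rel 0 x y
  mono : ∀ n x y, rel (n + 1) x y → rel n x y
  ext : ∀ x y, (∀ n, rel n x y) → x = y

/-- A sequence is Cauchy for an OFE. -/
def OFE.IsCauchy {X : Type*} (O : OFE X) (u : ℕ → X) : Prop :=
  ∀ n, ∃ m, ∀ i j, m ≤ i → m ≤ j → O.rel n (u i) (u j)

/-- `l` is a limit of the sequence `u`. -/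
def OFE.IsLimit {X : Type*} (O : OFE X) (u : ℕ → X) (l : X) : Prop :=
  ∀ n, ∃ m, ∀ i, m ≤ i → O.rel n (u i) l

/-- A complete OFE (COFE): every Cauchy sequence has a limit. -/
def OFE.IsComplete {X : Type*} (O : OFE X) : Prop :=
  ∀ u : ℕ → X, O.IsCauchy u → ∃ l, O.IsLimit u l

/-- A function is contractive. -/
def OFE.Contractive {X : Type*} (O : OFE X) (f : X → X) : Prop :=
  ∀ n x y, O.rel n x y → O.rel (n + 1) (f x) (f y)

/-- The metric induced by an OFE. -/
noncomputable def OFE.dist {X : Type*} (O : OFE X) (x y : X) : ℝ :=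
  sInf {r : ℝ | ∃ n : ℕ, O.rel n x y ∧ r = (2 : ℝ) ^ (-(n : ℤ))}

namespace OFE

variable {X Y : Type*} {O : OFE X} {P : OFE Y} {u : ℕ → X} {l l' : X}

/-- A map between OFEs is non-expansive if it preserves every level of equivalence; this is the
notion of morphism of OFEs, and contractive maps are the main example here. -/
def NonExpansive (O : OFE X) (P : OFE Y) (f : X → Y) : Prop :=
  ∀ n x y, O.rel n x y → P.rel n (f x) (f y)

theorem IsLimit.unique (hl : O.IsLimit u l) (hl' : O.IsLimit u l') : l = l' := by
  refine O.ext l l' fun n => ?_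
  obtain ⟨m, hm⟩ := hl n
  obtain ⟨m', hm'⟩ := hl' n
  have h : O.rel n (u (max m m')) l := hm _ (le_max_left m m')
  have h' : O.rel n (u (max m m')) l' := hm' _ (le_max_right m m')
  exact (O.equiv n).trans ((O.equiv n).symm h) h'

theorem IsLimit.comp_add_right (hl : O.IsLimit u l) (k : ℕ) :
    O.IsLimit (fun i => u (i + k)) l := fun n =>
  let ⟨m, hm⟩ := hl n
  ⟨m, fun i hi => hm (i + k) (Nat.le_add_right_of_le hi)⟩

theorem NonExpansive.isLimit_comp {f : X → Y} (hf : NonExpansive O P f) (hl : O.IsLimit u l) :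
    P.IsLimit (fun i => f (u i)) (f l) := fun n =>
  let ⟨m, hm⟩ := hl n
  ⟨m, fun i hi => hf n (u i) l (hm i hi)⟩

variable {f : X → X}

theorem NonExpansive.isFixedPt_of_isLimit_iterate {x : X} (hf : NonExpansive O O f)
    (hl : O.IsLimit (fun n => f^[n] x) l) : Function.IsFixedPt f l := by
  have h_image : O.IsLimit (fun n => f^[n + 1] x) (f l) := by
    simpa only [Function.iterate_succ_apply'] using hf.isLimit_comp hl
  exact h_image.unique (hl.comp_add_right 1)

namespace Contractive

theorem nonExpansive (hf : O.Contractive f) : NonExpansive O O f := fun n x y h =>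
  O.mono n (f x) (f y) (hf n x y h)

theorem rel_iterate (hf : O.Contractive f) (n : ℕ) (x y : X) :
    O.rel n (f^[n] x) (f^[n] y) := by
  induction n with
  | zero => exact O.total_zero x y
  | succ n ih =>
    simpa only [Function.iterate_succ_apply'] using hf n (f^[n] x) (f^[n] y) ih

theorem isCauchy_iterate (hf : O.Contractive f) (x : X) : O.IsCauchy (fun n => f^[n] x) := by
  refine fun n => ⟨n, fun i j hi hj => ?_⟩
  obtain ⟨a, rfl⟩ := Nat.exists_eq_add_of_le hi
  obtain ⟨b, rfl⟩ := Nat.exists_eq_add_of_le hj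
  simpa only [Function.iterate_add_apply] using hf.rel_iterate n (f^[a] x) (f^[b] x)

theorem eq_of_isFixedPt {x y : X} (hf : O.Contractive f) (hx : Function.IsFixedPt f x)
    (hy : Function.IsFixedPt f y) : x = y := by
  refine O.ext x y fun n => ?_
  simpa only [(hx.iterate n).eq, (hy.iterate n).eq] using hf.rel_iterate n x y

end Contractive

end OFE

theorem banach_fixed_point {X : Type*} (O : OFE X) (hX : O.IsComplete)
    (f : X → X) (hf : O.Contractive f) (x₀ : X) :
    O.IsCauchy (fun n => f^[n] x₀) ∧
    (∀ l, O.IsLimit (fun n => f^[n] x₀) l → f l = l) ∧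
    (∃! x, f x = x) := by
  have h_cauchy : O.IsCauchy (fun n => f^[n] x₀) := hf.isCauchy_iterate x₀
  have h_fixed : ∀ l, O.IsLimit (fun n => f^[n] x₀) l → f l = l := fun _ hl =>
    hf.nonExpansive.isFixedPt_of_isLimit_iterate hl
  obtain ⟨l, hl⟩ := hX _ h_cauchy
  exact ⟨h_cauchy, h_fixed, l, h_fixed l hl, fun _ hy => hf.eq_of_isFixedPt hy (h_fixed l hl)⟩
end

section
/- Let X be a complete ordered family of equivalences (COFE) and define d : X → X → ℝ by d x y = sInf { (2 : ℝ) ^ (-(n : ℤ)) | n : ℕ, x ≈[n] y }. Then (X, d) is a complete metric space in the following sense: for every sequence u : ℕ → X such that for all ε > 0 there exists N with d (u i) (u j) < ε for all i, j ≥ N, there exists l : X such that for all ε > 0 there exists N with d (u i) l < ε for all i ≥ N. -/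
namespace OFE

open Filter

variable {X : Type*} (O : OFE X)

theorem antitone_rel : Antitone O.rel :=
  antitone_nat_of_succ_le O.mono

variable {x y : X} {n : ℕ}

theorem dist_le_of_rel (h : O.rel n x y) : O.dist x y ≤ (2 : ℝ) ^ (-(n : ℤ)) := by
  refine csInf_le ⟨0, ?_⟩ ⟨n, h, rfl⟩
  rintro _ ⟨k, -, rfl⟩
  positivity

theorem exists_rel_of_dist_lt {ε : ℝ} (h : O.dist x y < ε) :
    ∃ k : ℕ, O.rel k x y ∧ (2 : ℝ) ^ (-(k : ℤ)) < ε := by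
  have hne : {r : ℝ | ∃ k : ℕ, O.rel k x y ∧ r = (2 : ℝ) ^ (-(k : ℤ))}.Nonempty :=
    ⟨_, 0, O.total_zero x y, rfl⟩
  obtain ⟨_, ⟨k, hk, rfl⟩, hkε⟩ := exists_lt_of_csInf_lt hne h
  exact ⟨k, hk, hkε⟩

theorem dist_le_two_zpow_neg_iff : O.dist x y ≤ (2 : ℝ) ^ (-(n : ℤ)) ↔ O.rel n x y := by
  refine ⟨fun h ↦ ?_, O.dist_le_of_rel⟩
  -- No power of two lies strictly between `2⁻ⁿ` and `2¹⁻ⁿ`.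
  have hlt : O.dist x y < (2 : ℝ) ^ (1 - (n : ℤ)) :=
    h.trans_lt (zpow_lt_zpow_right₀ one_lt_two (by lia))
  obtain ⟨k, hk, hkn⟩ := O.exists_rel_of_dist_lt hlt
  have hexp : -(k : ℤ) < 1 - n := (zpow_lt_zpow_iff_right₀ one_lt_two).1 hkn
  exact O.antitone_rel (by lia : n ≤ k) x y hk

theorem forall_eventually_rel_iff {ι : Type*} {f : Filter ι} {a b : ι → X} :
    (∀ n, ∀ᶠ i in f, O.rel n (a i) (b i)) ↔
      ∀ ε : ℝ, 0 < ε → ∀ᶠ i in f, O.dist (a i) (b i) < ε := by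
  refine ⟨fun h ε hε ↦ ?_, fun h n ↦ ?_⟩
  · obtain ⟨n, hn⟩ : ∃ n : ℕ, (2 : ℝ) ^ (-(n : ℤ)) < ε := by
      simpa using exists_pow_lt_of_lt_one hε (inv_lt_one_of_one_lt₀ (one_lt_two (α := ℝ)))
    exact (h n).mono fun i hi ↦ (O.dist_le_of_rel hi).trans_lt hn
  · exact (h _ (by positivity)).mono fun i hi ↦ O.dist_le_two_zpow_neg_iff.1 hi.le

theorem isCauchy_iff_dist {u : ℕ → X} :
    O.IsCauchy u ↔
      ∀ ε : ℝ, 0 < ε → ∃ N, ∀ i j, N ≤ i → N ≤ j → O.dist (u i) (u j) < ε := by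
  simpa only [IsCauchy, eventually_atTop_prod_self] using
    O.forall_eventually_rel_iff (f := atTop) (a := fun p : ℕ × ℕ ↦ u p.1) (b := fun p ↦ u p.2)

theorem isLimit_iff_dist {u : ℕ → X} {l : X} :
    O.IsLimit u l ↔ ∀ ε : ℝ, 0 < ε → ∃ N, ∀ i, N ≤ i → O.dist (u i) l < ε := by
  simpa only [IsLimit, eventually_atTop] using
    O.forall_eventually_rel_iff (f := atTop) (a := u) (b := fun _ ↦ l)

end OFE

theorem cofe_metric_complete {X : Type*} (O : OFE X) (hX : O.IsComplete) :
    ∀ u : ℕ → X,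
      (∀ ε : ℝ, 0 < ε → ∃ N, ∀ i j, N ≤ i → N ≤ j → O.dist (u i) (u j) < ε) →
      ∃ l : X, ∀ ε : ℝ, 0 < ε → ∃ N, ∀ i, N ≤ i → O.dist (u i) l < ε := by
  intro u hu
  obtain ⟨l, hl⟩ := hX u (O.isCauchy_iff_dist.2 hu)
  exact ⟨l, O.isLimit_iff_dist.1 hl⟩
end

section
/- Let D be an ωCPO and let (q i) be a sequence of elements of E(D) such that q i ≼ q j whenever i ≤ j. Then for each x : D the sequence i ↦ q i x is a monotone chain, and the map q∞ defined by q∞ x := ωSup (i ↦ q i x) satisfies: q∞ is continuous, q∞ ∘ q∞ = q∞, q∞ x ≤ x for all x (so q∞ ∈ E(D)); q i ≼ q∞ for every i; and for every r ∈ E(D) with q i ≼ r for all i, one has q∞ ≼ r. Hence q∞ is the least upper bound of the chain (q i) in (E(D), ≼). -/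
open OmegaCompletePartialOrder

/-!
On monotone idempotents below the identity, the relation `p ∘ q = p ∧ q ∘ p = p` is the pointwise
order, and a pointwise supremum of such idempotents is again one. Hence a pointwise supremum is also
a least upper bound for the relation.
-/

section

variable {D : Type*} {p q : D → D}

lemma le_of_comp_eq_left [LE D] (hp : ∀ x, p x ≤ x) (h : p ∘ q = p) : p ≤ q := fun x =>
  calc
    p x = p (q x) := (congrFun h x).symm
    _ ≤ q x := hp (q x)

lemma comp_eq_and_comp_eq_of_le [PartialOrder D] (hp : Monotone p) (hidem : p ∘ p = p)
    (hq : ∀ x, q x ≤ x) (h : p ≤ q) : p ∘ q = p ∧ q ∘ p = p := by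
  have hpp (x : D) : p (p x) = p x := congrFun hidem x
  constructor <;> funext x
  · exact le_antisymm (hp (hq x)) ((hpp x).ge.trans (hp (h x)))
  · exact le_antisymm (hq (p x)) ((hpp x).ge.trans (h (p x)))

lemma comp_self_eq_of_isLUB [PartialOrder D] {S : Set (D → D)} (hmono : ∀ p ∈ S, Monotone p)
    (hidem : ∀ p ∈ S, p ∘ p = p) (hS : IsLUB S q) (hq : ∀ x, q x ≤ x) : q ∘ q = q := by
  have hle : q ≤ q ∘ q := hS.2 fun p hp x =>
    calc
      p x = p (p x) := (congrFun (hidem p hp) x).symm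
      _ ≤ p (q x) := hmono p hp (hS.1 hp x)
      _ ≤ q (q x) := hS.1 hp (q x)
  exact le_antisymm (fun x => hq (q x)) hle

end

lemma scottContinuousOn_of_forall_isLUB {ι : Sort*} {α β : Type*} [Preorder α] [Preorder β]
    {𝒟 : Set (Set α)} {f : ι → α → β} {g : α → β} (hf : ∀ i, ScottContinuousOn 𝒟 (f i))
    (hg : ∀ x, IsLUB (Set.range fun i => f i x) (g x)) : ScottContinuousOn 𝒟 g := by
  intro d hd hne hdir a ha
  have hfa (i : ι) : IsLUB (f i '' d) (f i a) := hf i hd hne hdir ha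
  have hle (i : ι) (x : α) : f i x ≤ g x := (hg x).1 (Set.mem_range_self i)
  constructor
  · rintro _ ⟨x, hx, rfl⟩
    refine (hg x).2 (Set.forall_mem_range.2 fun i => ?_)
    exact ((hfa i).1 (Set.mem_image_of_mem _ hx)).trans (hle i a)
  · intro u hu
    refine (hg a).2 (Set.forall_mem_range.2 fun i => (hfa i).2 ?_)
    refine Set.forall_mem_image.2 fun x hx => ?_
    exact (hle i x).trans (hu (Set.mem_image_of_mem g hx))

theorem lub_of_chain_of_idempotents_general {ι : Sort*} {D : Type*} [PartialOrder D]
    {𝒟 : Set (Set D)} (hpair : ∀ a b : D, a ≤ b → {a, b} ∈ 𝒟) {q : ι → D → D}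
    (hcont : ∀ i, ScottContinuousOn 𝒟 (q i)) (hidem : ∀ i, q i ∘ q i = q i)
    (hbelow : ∀ i x, q i x ≤ x) {qInf : D → D}
    (hInf : ∀ x, IsLUB (Set.range fun i => q i x) (qInf x)) :
    ScottContinuousOn 𝒟 qInf ∧
    qInf ∘ qInf = qInf ∧
    (∀ x, qInf x ≤ x) ∧
    (∀ i, q i ∘ qInf = q i ∧ qInf ∘ q i = q i) ∧
    ∀ r : D → D, (∀ x, r x ≤ x) → (∀ i, q i ∘ r = q i) →
      qInf ∘ r = qInf ∧ r ∘ qInf = qInf := by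
  have hmono (i : ι) : Monotone (q i) := (hcont i).monotone 𝒟 hpair
  have hlub : IsLUB (Set.range q) qInf :=
    isLUB_pi.2 fun x => by rw [← Set.range_comp]; exact hInf x
  have hInf_cont : ScottContinuousOn 𝒟 qInf := scottContinuousOn_of_forall_isLUB hcont hInf
  have hInf_below : ∀ x, qInf x ≤ x := hlub.2 (Set.forall_mem_range.2 hbelow)
  have hInf_idem : qInf ∘ qInf = qInf :=
    comp_self_eq_of_isLUB (Set.forall_mem_range.2 hmono) (Set.forall_mem_range.2 hidem)
      hlub hInf_below
  refine ⟨hInf_cont, hInf_idem, hInf_below, fun i => ?_, fun r hr_below hqr => ?_⟩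
  · exact comp_eq_and_comp_eq_of_le (hmono i) (hidem i) hInf_below
      (hlub.1 (Set.mem_range_self i))
  · have hInf_le : qInf ≤ r :=
      hlub.2 (Set.forall_mem_range.2 fun i => le_of_comp_eq_left (hbelow i) (hqr i))
    exact comp_eq_and_comp_eq_of_le (hInf_cont.monotone 𝒟 hpair) hInf_idem hr_below hInf_le

theorem lub_of_chain_of_idempotents {D : Type*} [OmegaCompletePartialOrder D]
    (q : ℕ → D → D)
    (hcont : ∀ i, ωScottContinuous (q i))
    (hidem : ∀ i, q i ∘ q i = q i)
    (hbelow : ∀ i x, q i x ≤ x)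
    (hchain : ∀ i j, i ≤ j → q i ∘ q j = q i ∧ q j ∘ q i = q i) :
    (∀ x : D, Monotone fun i => q i x) ∧
    ∀ qInf : D → D, (∀ x : D, IsLUB (Set.range fun i => q i x) (qInf x)) →
      ωScottContinuous qInf ∧
      qInf ∘ qInf = qInf ∧
      (∀ x, qInf x ≤ x) ∧
      (∀ i, q i ∘ qInf = q i ∧ qInf ∘ q i = q i) ∧
      (∀ r : D → D, ωScottContinuous r → r ∘ r = r → (∀ x, r x ≤ x) →
        (∀ i, q i ∘ r = q i ∧ r ∘ q i = q i) →
        qInf ∘ r = qInf ∧ r ∘ qInf = qInf) := by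
  refine ⟨fun x i j hij => le_of_comp_eq_left (hbelow i) (hchain i j hij).1 x, fun qInf hInf => ?_⟩
  obtain ⟨hInf_cont, hInf_idem, hInf_below, hq_Inf, hInf_least⟩ :=
    lub_of_chain_of_idempotents_general (𝒟 := Set.range fun c : Chain D => Set.range c)
      (fun a b hab => ⟨Chain.pair a b hab, Chain.range_pair a b hab⟩) hcont hidem hbelow hInf
  exact ⟨hInf_cont, hInf_idem, hInf_below, hq_Inf,
    fun r _ _ hr_below hqr => hInf_least r hr_below fun i => (hqr i).1⟩
end
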